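/- For every k ≥ 0 and every i with 0 ≤ i ≤ k, the number of residues n ∈ {0, 1, …, 2^k − 1} such that k₂(n,k) = i equals the binomial coefficient C(k, i), where k₂(n,k) is the number of indices j with 0 ≤ j < k such that T^j(n) is odd. -/

import Mathlib

/-!
Adding a multiple of `2 ^ k` to `n` leaves the first `k` parities of the orbit unchanged, and
`T^[k] (n + 2 ^ k * m) = T^[k] n + 3 ^ (k2 n k) * m` (`iterate_add_two_pow_mul`). With `m = 1` the
added term is odd, so exactly one of `T^[k] n` and `T^[k] (n + 2 ^ k)` is odd: for each
`n < 2 ^ k`, the two lifts `n` and `n + 2 ^ k` modulo `2 ^ (k + 1)` have `k2 · (k + 1)` equal to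
`k2 n k` and `k2 n k + 1` in some order. The counts therefore satisfy Pascal's recurrence.
-/

/-- The 3x+1 map: T(n) = n/2 if n is even, (3n+1)/2 if n is odd. -/
def T (n : ℕ) : ℕ := if n % 2 = 0 then n / 2 else (3 * n + 1) / 2

/-- k₂(n,k): the number of indices j < k such that T^j(n) is odd. -/
def k2 (n k : ℕ) : ℕ := ((Finset.range k).filter fun j => Odd (T^[j] n)).card

lemma k2_succ (n k : ℕ) : k2 n (k + 1) = k2 n k + if Odd (T^[k] n) then 1 else 0 := by
  simp only [k2, Finset.card_filter, Finset.sum_range_succ]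

lemma T_add_two_mul (x y : ℕ) : T (x + 2 * y) = T x + (if Odd x then 3 else 1) * y := by
  simp only [T, Nat.odd_iff]
  split_ifs <;> omega

lemma iterate_add_two_pow_mul (n k m : ℕ) :
    k2 (n + 2 ^ k * m) k = k2 n k ∧ T^[k] (n + 2 ^ k * m) = T^[k] n + 3 ^ (k2 n k) * m := by
  induction k generalizing m with
  | zero => simp [k2]
  | succ k ih =>
    obtain ⟨h1, h2⟩ := ih (2 * m)
    have e : n + 2 ^ (k + 1) * m = n + 2 ^ k * (2 * m) := by ring
    have e2 : T^[k] n + 3 ^ (k2 n k) * (2 * m) = T^[k] n + 2 * (3 ^ (k2 n k) * m) := by ring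
    have hodd : Odd (T^[k] n + 2 * (3 ^ (k2 n k) * m)) ↔ Odd (T^[k] n) := by
      simp only [Nat.odd_iff]; omega
    rw [e2] at h2
    rw [e, k2_succ, k2_succ, Function.iterate_succ_apply', Function.iterate_succ_apply', h1, h2,
      T_add_two_mul]
    refine ⟨by simp only [hodd], ?_⟩
    split_ifs <;> ring

lemma k2_add_two_pow_succ (n k : ℕ) :
    k2 (n + 2 ^ k) (k + 1) = k2 n k + if Odd (T^[k] n) then 0 else 1 := by
  obtain ⟨h1, h2⟩ := iterate_add_two_pow_mul n k 1
  rw [mul_one] at h1 h2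
  have h3 : Odd (3 ^ (k2 n k)) := Odd.pow (by decide)
  rw [k2_succ, h1, h2, mul_one]
  by_cases h : Odd (T^[k] n)
  · simp [h, h.add_odd h3]
  · simp [h, (Nat.not_odd_iff_even.mp h).add_odd h3]

/-- Splitting the residues modulo `2 ^ (k + 1)` into the pairs `n`, `n + 2 ^ k`. -/
lemma card_k2_succ (k i : ℕ) :
    ((Finset.range (2 ^ (k + 1))).filter fun n => k2 n (k + 1) = i).card =
      ((Finset.range (2 ^ k)).filter fun n => k2 n k = i).card +
      ((Finset.range (2 ^ k)).filter fun n => k2 n k + 1 = i).card := by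
  simp only [Finset.card_filter]
  rw [pow_succ, mul_two, Finset.sum_range_add, ← Finset.sum_add_distrib, ← Finset.sum_add_distrib]
  refine Finset.sum_congr rfl fun n _ => ?_
  rw [add_comm (2 ^ k) n, k2_add_two_pow_succ, k2_succ]
  by_cases h : Odd (T^[k] n)
  · simp only [h, if_true, add_zero]
    exact add_comm _ _
  · simp only [h, if_false, add_zero]

/-- The count without the restriction `i ≤ k`, as needed for the induction: both sides vanish
for `i > k`. -/
lemma card_k2_eq_choose_aux (k i : ℕ) :
    ((Finset.range (2 ^ k)).filter fun n => k2 n k = i).card = Nat.choose k i := by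
  induction k generalizing i with
  | zero => cases i <;> simp [k2]
  | succ k ih =>
    rw [card_k2_succ, ih]
    cases i with
    | zero => simp
    | succ i =>
      simp only [Nat.add_right_cancel_iff]
      rw [ih, Nat.choose_succ_succ', add_comm]

/-- Among the residues n ∈ {0, …, 2^k − 1}, exactly C(k, i) of them satisfy
k₂(n,k) = i. -/
theorem card_k2_eq_choose (k i : ℕ) (hi : i ≤ k) :
    ((Finset.range (2 ^ k)).filter fun n => k2 n k = i).card = Nat.choose k i := by
  exact card_k2_eq_choose_aux k i
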